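/- Type preservation of the CBN translation of the graded-monadic λ-calculus: if Γ ⊢_mon e : τ, then ⟦Γ⟧n ⊢ ⟦e⟧n :^⊥ ⟦τ⟧n in CBPV with effects; in particular, the translated term type-checks with the pure effect ⊥. -/

import Mathlib

set_option autoImplicit false

/-- A preordered monoid of effects `(E, ·, ⊥, ≤eff)`, with a distinguished `tock` effect. -/
structure EffSig (E : Type) where
  op : E → E → E
  bot : E
  tock : E
  le : E → E → Prop
  op_assoc : ∀ a b c, op (op a b) c = op a (op b c)
  bot_op : ∀ a, op bot a = a
  op_bot : ∀ a, op a bot = a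
  le_refl : ∀ a, le a a
  le_trans : ∀ a b c, le a b → le b c → le a c
  le_op : ∀ a b c d, le a b → le c d → le (op a c) (op b d)

namespace CBPVEff

mutual
/-- CBPV value types: `unit`, graded thunks `U_φ B`, positive products, sums. -/
inductive VTy (E : Type) : Type where
  | unit : VTy E
  | thunk : E → CTy E → VTy E
  | prod : VTy E → VTy E → VTy E
  | sum : VTy E → VTy E → VTy E
/-- CBPV computation types: functions, returners `F A`, negative products. -/
inductive CTy (E : Type) : Type where
  | arr : VTy E → CTy E → CTy E
  | F : VTy E → CTy E
  | wth : CTy E → CTy E → CTy E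
end

mutual
/-- CBPV values (de Bruijn indices for variables). -/
inductive Val : Type where
  | var : Nat → Val
  | unit : Val
  | thunk : Comp → Val
  | pair : Val → Val → Val
  | inl : Val → Val
  | inr : Val → Val
/-- CBPV computations. -/
inductive Comp : Type where
  | lam : Comp → Comp
  | app : Comp → Val → Comp
  | force : Val → Comp
  | split : Val → Comp → Comp
  | cpair : Comp → Comp → Comp
  | fst : Comp → Comp
  | snd : Comp → Comp
  | ret : Val → Comp
  | letin : Comp → Comp → Comp
  | seq : Val → Comp → Comp
  | case : Val → Comp → Comp → Comp
  | tick : Comp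
end

mutual
/-- The value typing judgment `Γ ⊢ V : A` of the CBPV type-and-effect system. -/
inductive VHasTy {E : Type} (S : EffSig E) : List (VTy E) → Val → VTy E → Prop where
  | var : ∀ {Γ : List (VTy E)} {x : Nat} {A : VTy E},
      Γ[x]? = some A → VHasTy S Γ (.var x) A
  | unit : ∀ {Γ : List (VTy E)}, VHasTy S Γ .unit .unit
  | thunk : ∀ {Γ : List (VTy E)} {M : Comp} {φ : E} {B : CTy E},
      CHasTy S Γ M φ B → VHasTy S Γ (.thunk M) (.thunk φ B)
  | pair : ∀ {Γ : List (VTy E)} {V₁ V₂ : Val} {A₁ A₂ : VTy E},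
      VHasTy S Γ V₁ A₁ → VHasTy S Γ V₂ A₂ → VHasTy S Γ (.pair V₁ V₂) (.prod A₁ A₂)
  | inl : ∀ {Γ : List (VTy E)} {V : Val} {A₁ A₂ : VTy E},
      VHasTy S Γ V A₁ → VHasTy S Γ (.inl V) (.sum A₁ A₂)
  | inr : ∀ {Γ : List (VTy E)} {V : Val} {A₁ A₂ : VTy E},
      VHasTy S Γ V A₂ → VHasTy S Γ (.inr V) (.sum A₁ A₂)

/-- The computation typing judgment `Γ ⊢ M :^φ B` of the CBPV type-and-effect system. -/
inductive CHasTy {E : Type} (S : EffSig E) : List (VTy E) → Comp → E → CTy E → Prop where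
  | tick : ∀ {Γ : List (VTy E)} {φ : E}, S.le S.tock φ → CHasTy S Γ .tick φ (.F .unit)
  | lam : ∀ {Γ : List (VTy E)} {A : VTy E} {M : Comp} {φ : E} {B : CTy E},
      CHasTy S (A :: Γ) M φ B → CHasTy S Γ (.lam M) φ (.arr A B)
  | app : ∀ {Γ : List (VTy E)} {M : Comp} {V : Val} {A : VTy E} {φ : E} {B : CTy E},
      CHasTy S Γ M φ (.arr A B) → VHasTy S Γ V A → CHasTy S Γ (.app M V) φ B
  | force : ∀ {Γ : List (VTy E)} {V : Val} {φ' φ : E} {B : CTy E},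
      VHasTy S Γ V (.thunk φ' B) → S.le φ' φ → CHasTy S Γ (.force V) φ B
  | ret : ∀ {Γ : List (VTy E)} {V : Val} {A : VTy E} {φ : E},
      VHasTy S Γ V A → S.le S.bot φ → CHasTy S Γ (.ret V) φ (.F A)
  | letin : ∀ {Γ : List (VTy E)} {M N : Comp} {A : VTy E} {φ₁ φ₂ φ : E} {B : CTy E},
      CHasTy S Γ M φ₁ (.F A) → CHasTy S (A :: Γ) N φ₂ B →
      S.le (S.op φ₁ φ₂) φ → CHasTy S Γ (.letin M N) φ B
  | split : ∀ {Γ : List (VTy E)} {V : Val} {A₁ A₂ : VTy E} {N : Comp} {φ : E} {B : CTy E},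
      VHasTy S Γ V (.prod A₁ A₂) → CHasTy S (A₂ :: A₁ :: Γ) N φ B →
      CHasTy S Γ (.split V N) φ B
  | cpair : ∀ {Γ : List (VTy E)} {M₁ M₂ : Comp} {φ : E} {B₁ B₂ : CTy E},
      CHasTy S Γ M₁ φ B₁ → CHasTy S Γ M₂ φ B₂ → CHasTy S Γ (.cpair M₁ M₂) φ (.wth B₁ B₂)
  | fst : ∀ {Γ : List (VTy E)} {M : Comp} {φ : E} {B₁ B₂ : CTy E},
      CHasTy S Γ M φ (.wth B₁ B₂) → CHasTy S Γ (.fst M) φ B₁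
  | snd : ∀ {Γ : List (VTy E)} {M : Comp} {φ : E} {B₁ B₂ : CTy E},
      CHasTy S Γ M φ (.wth B₁ B₂) → CHasTy S Γ (.snd M) φ B₂
  | seq : ∀ {Γ : List (VTy E)} {V : Val} {M : Comp} {φ : E} {B : CTy E},
      VHasTy S Γ V .unit → CHasTy S Γ M φ B → CHasTy S Γ (.seq V M) φ B
  | case : ∀ {Γ : List (VTy E)} {V : Val} {A₁ A₂ : VTy E} {M₁ M₂ : Comp} {φ : E} {B : CTy E},
      VHasTy S Γ V (.sum A₁ A₂) → CHasTy S (A₁ :: Γ) M₁ φ B →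
      CHasTy S (A₂ :: Γ) M₂ φ B → CHasTy S Γ (.case V M₁ M₂) φ B
end

/-- Lifting a de Bruijn renaming under one binder. -/
def liftRen (f : Nat → Nat) : Nat → Nat
  | 0 => 0
  | n + 1 => f n + 1

mutual
/-- Renaming of values. -/
def Val.rename : Val → (Nat → Nat) → Val
  | .var x, f => .var (f x)
  | .unit, _ => .unit
  | .thunk M, f => .thunk (M.rename f)
  | .pair V₁ V₂, f => .pair (V₁.rename f) (V₂.rename f)
  | .inl V, f => .inl (V.rename f)
  | .inr V, f => .inr (V.rename f)
/-- Renaming of computations. -/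
def Comp.rename : Comp → (Nat → Nat) → Comp
  | .lam M, f => .lam (M.rename (liftRen f))
  | .app M V, f => .app (M.rename f) (V.rename f)
  | .force V, f => .force (V.rename f)
  | .split V N, f => .split (V.rename f) (N.rename (liftRen (liftRen f)))
  | .cpair M₁ M₂, f => .cpair (M₁.rename f) (M₂.rename f)
  | .fst M, f => .fst (M.rename f)
  | .snd M, f => .snd (M.rename f)
  | .ret V, f => .ret (V.rename f)
  | .letin M N, f => .letin (M.rename f) (N.rename (liftRen f))
  | .seq V M, f => .seq (V.rename f) (M.rename f)
  | .case V M₁ M₂, f => .case (V.rename f) (M₁.rename (liftRen f)) (M₂.rename (liftRen f))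
  | .tick, _ => .tick
end

/-- Weakening: shift all free variables up by one. -/
def shift (M : Comp) : Comp := M.rename Nat.succ

/-- Weakening under one binder: shift all free variables except index 0 up by one. -/
def shift1 (M : Comp) : Comp := M.rename (liftRen Nat.succ)

/-- Weakening under two binders. -/
def shift2 (M : Comp) : Comp := M.rename (liftRen (liftRen Nat.succ))

end CBPVEff

namespace LamMon

/-- Types of the simply-typed λ-calculus with a graded monad `T_φ`. -/
inductive MTy (E : Type) : Type where
  | unit : MTy E
  | arr : MTy E → MTy E → MTy E
  | wth : MTy E → MTy E → MTy E
  | sum : MTy E → MTy E → MTy E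
  | T : E → MTy E → MTy E

/-- Terms of the graded-monadic λ-calculus (de Bruijn indices). -/
inductive MTm : Type where
  | var : Nat → MTm
  | lam : MTm → MTm
  | app : MTm → MTm → MTm
  | unit : MTm
  | seq : MTm → MTm → MTm
  | wpair : MTm → MTm → MTm
  | fst : MTm → MTm
  | snd : MTm → MTm
  | inl : MTm → MTm
  | inr : MTm → MTm
  | case : MTm → MTm → MTm → MTm
  | ret : MTm → MTm
  | bind : MTm → MTm → MTm
  | tick : MTm

/-- The typing judgment `Γ ⊢_mon e : τ`: a pure λ-calculus whose effects are
isolated inside the graded monadic type `T_φ`. -/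
inductive HasTy {E : Type} (S : EffSig E) : List (MTy E) → MTm → MTy E → Prop where
  | var : ∀ {Γ : List (MTy E)} {x : Nat} {τ : MTy E},
      Γ[x]? = some τ → HasTy S Γ (.var x) τ
  | lam : ∀ {Γ : List (MTy E)} {e : MTm} {τ₁ τ₂ : MTy E},
      HasTy S (τ₁ :: Γ) e τ₂ → HasTy S Γ (.lam e) (.arr τ₁ τ₂)
  | app : ∀ {Γ : List (MTy E)} {e₁ e₂ : MTm} {τ₁ τ₂ : MTy E},
      HasTy S Γ e₁ (.arr τ₁ τ₂) → HasTy S Γ e₂ τ₁ → HasTy S Γ (.app e₁ e₂) τ₂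
  | unit : ∀ {Γ : List (MTy E)}, HasTy S Γ .unit .unit
  | seq : ∀ {Γ : List (MTy E)} {e₁ e₂ : MTm} {τ : MTy E},
      HasTy S Γ e₁ .unit → HasTy S Γ e₂ τ → HasTy S Γ (.seq e₁ e₂) τ
  | wpair : ∀ {Γ : List (MTy E)} {e₁ e₂ : MTm} {τ₁ τ₂ : MTy E},
      HasTy S Γ e₁ τ₁ → HasTy S Γ e₂ τ₂ → HasTy S Γ (.wpair e₁ e₂) (.wth τ₁ τ₂)
  | fst : ∀ {Γ : List (MTy E)} {e : MTm} {τ₁ τ₂ : MTy E},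
      HasTy S Γ e (.wth τ₁ τ₂) → HasTy S Γ (.fst e) τ₁
  | snd : ∀ {Γ : List (MTy E)} {e : MTm} {τ₁ τ₂ : MTy E},
      HasTy S Γ e (.wth τ₁ τ₂) → HasTy S Γ (.snd e) τ₂
  | inl : ∀ {Γ : List (MTy E)} {e : MTm} {τ₁ τ₂ : MTy E},
      HasTy S Γ e τ₁ → HasTy S Γ (.inl e) (.sum τ₁ τ₂)
  | inr : ∀ {Γ : List (MTy E)} {e : MTm} {τ₁ τ₂ : MTy E},
      HasTy S Γ e τ₂ → HasTy S Γ (.inr e) (.sum τ₁ τ₂)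
  | case : ∀ {Γ : List (MTy E)} {e e₁ e₂ : MTm} {τ₁ τ₂ τ : MTy E},
      HasTy S Γ e (.sum τ₁ τ₂) → HasTy S (τ₁ :: Γ) e₁ τ →
      HasTy S (τ₂ :: Γ) e₂ τ → HasTy S Γ (.case e e₁ e₂) τ
  | ret : ∀ {Γ : List (MTy E)} {e : MTm} {τ : MTy E} {φ : E},
      HasTy S Γ e τ → S.le S.bot φ → HasTy S Γ (.ret e) (.T φ τ)
  | bind : ∀ {Γ : List (MTy E)} {e₁ e₂ : MTm} {τ₁ τ₂ : MTy E} {φ₁ φ₂ φ : E},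
      HasTy S Γ e₁ (.T φ₁ τ₁) → HasTy S (τ₁ :: Γ) e₂ (.T φ₂ τ₂) →
      S.le (S.op φ₁ φ₂) φ → HasTy S Γ (.bind e₁ e₂) (.T φ τ₂)
  | tick : ∀ {Γ : List (MTy E)} {φ : E}, S.le S.tock φ → HasTy S Γ .tick (.T φ .unit)

end LamMon

open CBPVEff LamMon

/-- CBN translation of graded-monadic source types into CBPV computation types;
the graded monad is translated as `⟦T_φ τ⟧n = F (U_φ (F (U_⊥ ⟦τ⟧n)))`. -/
def tyTransN {E : Type} (S : EffSig E) : MTy E → CTy E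
  | .unit => .F .unit
  | .arr τ₁ τ₂ => .arr (.thunk S.bot (tyTransN S τ₁)) (tyTransN S τ₂)
  | .wth τ₁ τ₂ => .wth (tyTransN S τ₁) (tyTransN S τ₂)
  | .sum τ₁ τ₂ => .F (.sum (.thunk S.bot (tyTransN S τ₁)) (.thunk S.bot (tyTransN S τ₂)))
  | .T φ τ => .F (.thunk φ (.F (.thunk S.bot (tyTransN S τ))))

/-- Levy's CBN translation of source terms into CBPV computations, extended
with the graded monadic operations. -/
def tmTransN : MTm → Comp
  | .var x => .force (.var x)
  | .lam e => .lam (tmTransN e)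
  | .app e₁ e₂ => .app (tmTransN e₁) (.thunk (tmTransN e₂))
  | .unit => .ret .unit
  | .seq e₁ e₂ => .letin (tmTransN e₁) (.seq (.var 0) (shift (tmTransN e₂)))
  | .wpair e₁ e₂ => .cpair (tmTransN e₁) (tmTransN e₂)
  | .fst e => .fst (tmTransN e)
  | .snd e => .snd (tmTransN e)
  | .inl e => .ret (.inl (.thunk (tmTransN e)))
  | .inr e => .ret (.inr (.thunk (tmTransN e)))
  | .case e e₁ e₂ =>
      .letin (tmTransN e) (.case (.var 0) (shift1 (tmTransN e₁)) (shift1 (tmTransN e₂)))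
  | .ret e => .ret (.thunk (.ret (.thunk (tmTransN e))))
  | .bind e₁ e₂ =>
      .ret (.thunk (.letin (.letin (tmTransN e₁) (.force (.var 0)))
        (.letin (tmTransN e₂) (.force (.var 0)))))
  | .tick => .ret (.thunk (.letin .tick (.ret (.thunk (.ret (.var 0))))))

/-- Lifting a context-respecting renaming under a binder. -/
theorem liftRen_ok {E : Type} {Γ Δ : List (VTy E)} {f : Nat → Nat}
    (hf : ∀ x A, Γ[x]? = some A → Δ[f x]? = some A) (C : VTy E) :
    ∀ x A, (C :: Γ)[x]? = some A → (C :: Δ)[liftRen f x]? = some A := by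
  intro x A h
  cases x with
  | zero => simpa [liftRen] using h
  | succ n => simpa [liftRen] using hf n A (by simpa using h)

mutual
/-- Renaming preserves value typing. -/
theorem VHasTy_rename {E : Type} {S : EffSig E} {Γ Δ : List (VTy E)} {f : Nat → Nat}
    (hf : ∀ x A, Γ[x]? = some A → Δ[f x]? = some A) (V : Val) (A : VTy E)
    (h : VHasTy S Γ V A) : VHasTy S Δ (V.rename f) A := by
  cases V <;> cases h <;> simp only [Val.rename]
  case var.var x h => exact .var (hf _ _ h)
  case unit.unit => exact .unit
  case thunk.thunk M φ B h => exact .thunk (CHasTy_rename hf M _ _ h)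
  case pair.pair V₁ V₂ A₁ A₂ h₁ h₂ =>
    exact .pair (VHasTy_rename hf V₁ _ h₁) (VHasTy_rename hf V₂ _ h₂)
  case inl.inl V A₁ A₂ h => exact .inl (VHasTy_rename hf V _ h)
  case inr.inr V A₁ A₂ h => exact .inr (VHasTy_rename hf V _ h)
termination_by structural V

/-- Renaming preserves computation typing. -/
theorem CHasTy_rename {E : Type} {S : EffSig E} {Γ Δ : List (VTy E)} {f : Nat → Nat}
    (hf : ∀ x A, Γ[x]? = some A → Δ[f x]? = some A) (M : Comp) (φ : E) (B : CTy E)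
    (h : CHasTy S Γ M φ B) : CHasTy S Δ (M.rename f) φ B := by
  match M, h with
  | .tick, .tick h => exact .tick h
  | .lam M, .lam h => exact .lam (CHasTy_rename (liftRen_ok hf _) M _ _ h)
  | .app M V, .app h₁ h₂ => exact .app (CHasTy_rename hf M _ _ h₁) (VHasTy_rename hf V _ h₂)
  | .force V, .force h hl => exact .force (VHasTy_rename hf V _ h) hl
  | .ret V, .ret h hl => exact .ret (VHasTy_rename hf V _ h) hl
  | .letin M N, .letin h₁ h₂ hl =>
    exact .letin (CHasTy_rename hf M _ _ h₁) (CHasTy_rename (liftRen_ok hf _) N _ _ h₂) hl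
  | .split V N, .split h₁ h₂ =>
    exact .split (VHasTy_rename hf V _ h₁)
      (CHasTy_rename (liftRen_ok (liftRen_ok hf _) _) N _ _ h₂)
  | .cpair M N, .cpair h₁ h₂ =>
    exact .cpair (CHasTy_rename hf M _ _ h₁) (CHasTy_rename hf N _ _ h₂)
  | .fst M, .fst h => exact .fst (CHasTy_rename hf M _ _ h)
  | .snd M, .snd h => exact .snd (CHasTy_rename hf M _ _ h)
  | .seq V M, .seq h₁ h₂ => exact .seq (VHasTy_rename hf V _ h₁) (CHasTy_rename hf M _ _ h₂)
  | .case V M N, .case h₁ h₂ h₃ =>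
    exact .case (VHasTy_rename hf V _ h₁) (CHasTy_rename (liftRen_ok hf _) M _ _ h₂)
      (CHasTy_rename (liftRen_ok hf _) N _ _ h₃)
termination_by structural M
end

/-- Type preservation of the CBN translation of the graded-monadic λ-calculus:
if `Γ ⊢_mon e : τ` then `⟦Γ⟧n ⊢ ⟦e⟧n :^⊥ ⟦τ⟧n` in CBPV with effects; in
particular the translated term type-checks with the pure effect `⊥`. -/
theorem cbn_monadic_translation_preservation {E : Type} (S : EffSig E)
    {Γ : List (MTy E)} {e : MTm} {τ : MTy E} (h : LamMon.HasTy S Γ e τ) :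
    CHasTy S (Γ.map (fun τ' => VTy.thunk S.bot (tyTransN S τ'))) (tmTransN e)
      S.bot (tyTransN S τ) := by
  have hb : S.le S.bot S.bot := S.le_refl _
  have hbb : S.le (S.op S.bot S.bot) S.bot := by rw [S.bot_op]; exact hb
  have hs : ∀ (Γ : List (VTy E)) (C : VTy E), ∀ x A, Γ[x]? = some A →
      (C :: Γ)[Nat.succ x]? = some A := by
    intro Γ C x A h
    simpa using h
  induction h with
  | var h => exact .force (.var (by simp [h])) hb
  | lam _ ih => exact .lam ih
  | app _ _ ih₁ ih₂ => exact .app ih₁ (.thunk ih₂)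
  | unit => exact .ret .unit hb
  | seq _ _ ih₁ ih₂ =>
    exact .letin ih₁ (.seq (.var rfl) (CHasTy_rename (hs _ _) _ _ _ ih₂)) hbb
  | wpair _ _ ih₁ ih₂ => exact .cpair ih₁ ih₂
  | fst _ ih => exact .fst ih
  | snd _ ih => exact .snd ih
  | inl _ ih => exact .ret (.inl (.thunk ih)) hb
  | inr _ ih => exact .ret (.inr (.thunk ih)) hb
  | case _ _ _ ih ih₁ ih₂ =>
    exact .letin ih (.case (.var rfl) (CHasTy_rename (liftRen_ok (hs _ _) _) _ _ _ ih₁)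
      (CHasTy_rename (liftRen_ok (hs _ _) _) _ _ _ ih₂)) hbb
  | ret _ hl ih => exact .ret (.thunk (.ret (.thunk ih) hl)) hb
  | @bind Γ e₁ e₂ τ₁ τ₂ φ₁ φ₂ φ _ _ hl ih₁ ih₂ =>
    refine .ret (.thunk (.letin (φ₁ := φ₁) (φ₂ := φ₂)
      (.letin (φ₂ := φ₁) ih₁ (.force (.var rfl) (S.le_refl _)) ?_)
      (.letin (φ₂ := φ₂) ih₂ (.force (.var rfl) (S.le_refl _)) ?_) hl)) hb
    · rw [S.bot_op]; exact S.le_refl _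
    · rw [S.bot_op]; exact S.le_refl _
  | tick hl =>
    refine .ret (.thunk (.letin (φ₂ := S.bot) (.tick (S.le_refl _))
      (.ret (.thunk (.ret (.var rfl) hb)) hb) ?_)) hb
    rw [S.op_bot]; exact hl
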